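/- Let I be an ideal in ℤ[x₁,…,xₙ] with I ∩ ℤ = ⟨0⟩ and suppose h ∈ ℤ is nonzero and satisfies (I : h^∞) = I·ℚ[x₁,…,xₙ] ∩ ℤ[x₁,…,xₙ]. Then every prime ideal P that is minimal over I satisfies either P ∩ ℤ = ⟨0⟩ (in which case P contains I : h^∞) or h ∈ P. -/

import Mathlib

open MvPolynomial

/-- The saturation `I : h^∞ = ⋃ k, (I : h^k)`. -/
def Ideal.sat {A : Type*} [CommRing A] (I : Ideal A) (h : A) : Ideal A :=
  ⨆ k : ℕ, I.colon (Ideal.span {h ^ k})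

/-!
If `h ∉ P`, then `P` contains `I : h^∞`, which is the contraction of the extension of `I` to
`ℚ[x₁,…,xₙ]`. Being minimal over `I`, the prime `P` is also minimal over this larger ideal, and a
prime minimal over a contracted ideal is itself contracted from a prime `Q`. No proper ideal `Q` of
`ℚ[x₁,…,xₙ]` contains a nonzero constant.
-/

theorem sat_le_of_notMem {A : Type*} [CommRing A] {I P : Ideal A} {h : A}
    (hP : P.IsPrime) (hIP : I ≤ P) (hh : h ∉ P) : I.sat h ≤ P := by
  refine iSup_le fun k g hg => ?_
  have hmul : g * h ^ k ∈ P := hIP (Ideal.mem_colon_span_singleton.mp hg)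
  exact (hP.mem_or_mem hmul).resolve_right (mt (hP.mem_of_pow_mem k) hh)

theorem exists_isPrime_comap_eq_of_mem_minimalPrimes_of_comap_map_le {A B : Type*} [CommRing A]
    [CommRing B] {f : A →+* B} {I P : Ideal A} (hP : P ∈ I.minimalPrimes)
    (hIP : (I.map f).comap f ≤ P) : ∃ Q : Ideal B, Q.IsPrime ∧ Q.comap f = P := by
  have hmin : P ∈ ((I.map f).comap f).minimalPrimes :=
    ⟨⟨hP.1.1, hIP⟩, fun _ hQ => hP.2 ⟨hQ.1, Ideal.le_comap_map.trans hQ.2⟩⟩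
  obtain ⟨Q, hQ, -, hQP⟩ := Ideal.exists_comap_eq_of_mem_minimalPrimes f P hmin
  exact ⟨Q, hQ, hQP⟩

theorem eq_zero_of_C_mem {σ K : Type*} [Field K] {Q : Ideal (MvPolynomial σ K)} (hQ : Q ≠ ⊤)
    {a : K} (ha : C a ∈ Q) : a = 0 := by
  by_contra ha0
  exact hQ (Q.eq_top_of_isUnit_mem ha ((IsUnit.mk0 a ha0).map C))

theorem stmt_17_general {σ R K : Type*} [CommRing R] [Field K] {f : R →+* K}
    (hf : Function.Injective f) {I P : Ideal (MvPolynomial σ R)} {h : MvPolynomial σ R}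
    (hsat : (I.map (map f)).comap (map f) ≤ I.sat h) (hP : P ∈ I.minimalPrimes) :
    ((∀ a : R, C a ∈ P → a = 0) ∧ I.sat h ≤ P) ∨ h ∈ P := by
  refine or_iff_not_imp_right.mpr fun hh => ?_
  have hsatP : I.sat h ≤ P := sat_le_of_notMem hP.1.1 hP.1.2 hh
  obtain ⟨Q, hQ, rfl⟩ :=
    exists_isPrime_comap_eq_of_mem_minimalPrimes_of_comap_map_le hP (hsat.trans hsatP)
  refine ⟨fun a ha => (map_eq_zero_iff f hf).mp (eq_zero_of_C_mem hQ.ne_top ?_), hsatP⟩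
  rwa [Ideal.mem_comap, map_C] at ha

theorem stmt_17 (n : ℕ) (I : Ideal (MvPolynomial (Fin n) ℤ))
    (hI : ∀ a : ℤ, (C a : MvPolynomial (Fin n) ℤ) ∈ I → a = 0)
    (h : ℤ) (hh : h ≠ 0)
    (hsat : I.sat (C h) =
      Ideal.comap (MvPolynomial.map (Int.castRingHom ℚ))
        (Ideal.map (MvPolynomial.map (Int.castRingHom ℚ)) I)) :
    ∀ P ∈ I.minimalPrimes,
      ((∀ a : ℤ, (C a : MvPolynomial (Fin n) ℤ) ∈ P → a = 0) ∧ I.sat (C h) ≤ P) ∨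
      (C h : MvPolynomial (Fin n) ℤ) ∈ P :=
  fun _ hP => stmt_17_general (Int.castRingHom ℚ).injective_int hsat.ge hP
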